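/- arXiv:2603.02426 — 3 statements merged into one kernel-verified Lean document; each statement's English description precedes it below -/
import Mathlib

section
/- Let d, r, K be positive integers with d ≥ 2r. Let B, B* ∈ ℝ^{d×r} have orthonormal columns and let B*_⊥ ∈ ℝ^{d×(d−r)} be an orthonormal complement of B*. For k = 1,…,K let ω^k, ω^{*,k} ∈ ℝ^r, set z^k := B* ω^{*,k} and x^k := B ω^k − z^k, and let Z ∈ ℝ^{d×K} be the matrix whose k-th column is z^k. Assume the vectors z^1,…,z^K span the column space of B* (equivalently, rank Z = r). Then (1/K) Σ_{k=1}^K ‖x^k‖² ≥ (‖B*_⊥ᵀ B‖_F² / (rK)) · λ⁺_min(Z Zᵀ), where λ⁺_min(Z Zᵀ) denotes the smallest nonzero eigenvalue of Z Zᵀ and ‖·‖_F is the Frobenius norm. -/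
open Matrix BigOperators

/-- Frobenius norm of a real matrix. -/
noncomputable def frobNorm {m n : ℕ} (A : Matrix (Fin m) (Fin n) ℝ) : ℝ :=
  Real.sqrt (∑ i, ∑ j, (A i j) ^ 2)

theorem aux_trace_sq {m n : ℕ} (A : Matrix (Fin m) (Fin n) ℝ) :
    (Aᵀ * A).trace = ∑ j, ∑ i, (A i j) ^ 2 := by
  simp only [Matrix.trace, Matrix.diag, Matrix.mul_apply, Matrix.transpose_apply, sq]

theorem aux_trace_nonneg {m n : ℕ} (A : Matrix (Fin m) (Fin n) ℝ) :
    0 ≤ (Aᵀ * A).trace := by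
  rw [aux_trace_sq]
  positivity

/-- Lower bound of local head errors (Frobenius norm version):
(1/K) Σ_k ‖x^k‖² ≥ (‖B*_⊥ᵀ B‖_F² / (rK)) · λ⁺_min(Z Zᵀ). -/
theorem local_head_lower_bound_frobenius
    (d r K : ℕ) (hd : 0 < d) (hr : 0 < r) (hK : 0 < K) (hdr : 2 * r ≤ d)
    (B Bstar : Matrix (Fin d) (Fin r) ℝ) (Bperp : Matrix (Fin d) (Fin (d - r)) ℝ)
    (hB : Bᵀ * B = 1) (hBstar : Bstarᵀ * Bstar = 1)
    (hBperp : Bperpᵀ * Bperp = 1) (horth : Bstarᵀ * Bperp = 0)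
    (hcomp : Bstar * Bstarᵀ + Bperp * Bperpᵀ = 1)
    (ω ωstar : Fin K → Fin r → ℝ)
    (z x : Fin K → Fin d → ℝ)
    (hz : ∀ k, z k = Bstar.mulVec (ωstar k))
    (hx : ∀ k, x k = B.mulVec (ω k) - z k)
    (Z : Matrix (Fin d) (Fin K) ℝ) (hZ : ∀ i k, Z i k = z k i)
    (hrank : Z.rank = r)
    -- `lam` is the smallest nonzero eigenvalue of the PSD matrix Z Zᵀ
    (lam : ℝ) (hlam_ne : lam ≠ 0)
    (hlam_eig : Module.End.HasEigenvalue (Matrix.toLin' (Z * Zᵀ)) lam)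
    (hlam_min : ∀ μ : ℝ, μ ≠ 0 →
      Module.End.HasEigenvalue (Matrix.toLin' (Z * Zᵀ)) μ → lam ≤ μ) :
    (1 / (K : ℝ)) * ∑ k, (∑ i, (x k i) ^ 2)
      ≥ (frobNorm (Bperpᵀ * B)) ^ 2 / ((r : ℝ) * (K : ℝ)) * lam := by
  have hfrob : (frobNorm (Bperpᵀ * B)) ^ 2 = ((Bperpᵀ * B)ᵀ * (Bperpᵀ * B)).trace := by
    rw [aux_trace_sq, frobNorm, Real.sq_sqrt (by positivity), Finset.sum_comm]
  have hKr : (0 : ℝ) < K := by exact_mod_cast hK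
  have hrr : (1 : ℝ) ≤ r := by exact_mod_cast hr
  have hF0 : 0 ≤ (frobNorm (Bperpᵀ * B)) ^ 2 := sq_nonneg _
  have hS0 : 0 ≤ ∑ k, (∑ i, (x k i) ^ 2) := by positivity
  suffices hmain : (frobNorm (Bperpᵀ * B)) ^ 2 * lam ≤ ∑ k, (∑ i, (x k i) ^ 2) by
    have h2 : (frobNorm (Bperpᵀ * B)) ^ 2 * lam ≤ r * ∑ k, (∑ i, (x k i) ^ 2) := by
      nlinarith
    have hr0 : (0 : ℝ) < r := by linarith
    rw [ge_iff_le, div_mul_eq_mul_div, div_mul_eq_mul_div, one_mul,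
      div_le_div_iff₀ (by positivity) hKr]
    nlinarith
  -- matrices
  set W : Matrix (Fin r) (Fin K) ℝ := Matrix.of (fun i k => ωstar k i) with hW
  set Om : Matrix (Fin r) (Fin K) ℝ := Matrix.of (fun i k => ω k i) with hOm
  have hZW : Z = Bstar * W := by
    ext i k
    rw [hZ, hz, Matrix.mul_apply]
    rfl
  have hX : ∑ k, (∑ i, (x k i) ^ 2) = ((B * Om - Z)ᵀ * (B * Om - Z)).trace := by
    rw [aux_trace_sq]
    refine Finset.sum_congr rfl fun k _ => Finset.sum_congr rfl fun i _ => ?_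
    rw [hx, Matrix.sub_apply, hZ, Pi.sub_apply, Matrix.mul_apply]
    rfl
  have hTh : (W * Wᵀ - lam • (1 : Matrix (Fin r) (Fin r) ℝ)).IsHermitian := by
    rw [Matrix.IsHermitian, Matrix.conjTranspose_eq_transpose_of_trivial]
    simp
  have hinj : Function.Injective (W * Wᵀ).mulVec := by
    have h1 : (W * Wᵀ).rank = r := by
      rw [Matrix.rank_self_mul_transpose]
      apply le_antisymm
      · simpa using W.rank_le_height
      · have h0 := Matrix.rank_mul_le_right Bstar W
        rw [← hZW, hrank] at h0
        exact h0
    have h2 : LinearMap.range (W * Wᵀ).mulVecLin = ⊤ := by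
      apply Submodule.eq_top_of_finrank_eq
      rw [Module.finrank_fin_fun]
      exact h1
    have h3 : Function.Injective (W * Wᵀ).mulVecLin :=
      LinearMap.injective_iff_surjective.mpr (LinearMap.range_eq_top.mp h2)
    exact h3
  have hT : (W * Wᵀ - lam • (1 : Matrix (Fin r) (Fin r) ℝ)).PosSemidef := by
    rw [hTh.posSemidef_iff_eigenvalues_nonneg]
    intro i
    set v : Fin r → ℝ := (hTh.eigenvectorBasis i).ofLp with hv
    have hv0 : v ≠ 0 := by
      intro h
      have := hTh.eigenvectorBasis.orthonormal.ne_zero i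
      apply this
      ext j
      exact congrFun h j
    have he : (W * Wᵀ - lam • (1 : Matrix (Fin r) (Fin r) ℝ)) *ᵥ v = hTh.eigenvalues i • v :=
      hTh.mulVec_eigenvectorBasis i
    have he2 : (W * Wᵀ) *ᵥ v = (hTh.eigenvalues i + lam) • v := by
      rw [Matrix.sub_mulVec, Matrix.smul_mulVec, Matrix.one_mulVec] at he
      rw [add_smul, ← he]; simp
    have hne : hTh.eigenvalues i + lam ≠ 0 := by
      intro h
      rw [h, zero_smul] at he2
      exact hv0 (hinj (by rw [he2, Matrix.mulVec_zero]))
    have hBv : Bstar *ᵥ v ≠ 0 := by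
      intro h
      have : Bstarᵀ *ᵥ (Bstar *ᵥ v) = 0 := by rw [h, Matrix.mulVec_zero]
      rw [Matrix.mulVec_mulVec, hBstar, Matrix.one_mulVec] at this
      exact hv0 this
    have := hlam_min _ hne (Module.End.hasEigenvalue_of_hasEigenvector
      (x := Bstar *ᵥ v) ⟨by
        rw [Module.End.mem_eigenspace_iff, Matrix.toLin'_apply, Matrix.mulVec_mulVec, hZW,
          Matrix.transpose_mul]
        rw [show Bstar * W * (Wᵀ * Bstarᵀ) * Bstar = Bstar * (W * Wᵀ) by
          simp only [Matrix.mul_assoc, hBstar, Matrix.mul_one]]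
        rw [← Matrix.mulVec_mulVec, he2, Matrix.mulVec_smul], hBv⟩)
    show (0 : ℝ) ≤ _
    linarith
  -- the residual matrix
  set C : Matrix (Fin d) (Fin r) ℝ := Bstar - B * (Bᵀ * Bstar) with hC
  have hCC : Cᵀ * C = 1 - Bstarᵀ * B * (Bᵀ * Bstar) := by
    have e : ∀ M : Matrix (Fin r) (Fin r) ℝ, Bᵀ * (B * M) = M := fun M => by
      rw [← Matrix.mul_assoc, hB, Matrix.one_mul]
    simp only [hC, Matrix.transpose_sub, Matrix.transpose_mul, Matrix.transpose_transpose,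
      Matrix.sub_mul, Matrix.mul_sub, Matrix.mul_assoc, hBstar, e]
    abel
  have hFC : (frobNorm (Bperpᵀ * B)) ^ 2 = (Cᵀ * C).trace := by
    rw [hfrob, hCC]
    have e : Bperp * Bperpᵀ = 1 - Bstar * Bstarᵀ := by rw [← hcomp]; abel
    have : (Bperpᵀ * B)ᵀ * (Bperpᵀ * B) = 1 - Bᵀ * Bstar * (Bstarᵀ * B) := by
      rw [Matrix.transpose_mul, Matrix.transpose_transpose, Matrix.mul_assoc,
        ← Matrix.mul_assoc Bperp, e, Matrix.sub_mul, Matrix.mul_sub, Matrix.one_mul, hB]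
      simp only [Matrix.mul_assoc]
    rw [this, Matrix.trace_sub, Matrix.trace_sub, Matrix.trace_mul_comm (Bᵀ * Bstar)]
  have hdec : (B * Om - Z)ᵀ * (B * Om - Z)
      = (Om - Bᵀ * Z)ᵀ * (Om - Bᵀ * Z) + Wᵀ * (Cᵀ * C) * W := by
    have e : ∀ M : Matrix (Fin r) (Fin K) ℝ, Bᵀ * (B * M) = M := fun M => by
      rw [← Matrix.mul_assoc, hB, Matrix.one_mul]
    have e2 : ∀ M : Matrix (Fin r) (Fin K) ℝ, Bstarᵀ * (Bstar * M) = M := fun M => by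
      rw [← Matrix.mul_assoc, hBstar, Matrix.one_mul]
    rw [hCC, hZW]
    simp only [Matrix.transpose_sub, Matrix.transpose_mul, Matrix.transpose_transpose,
      Matrix.sub_mul, Matrix.mul_sub, Matrix.mul_assoc, Matrix.one_mul, e, e2]
    abel
  clear_value C
  have htr : (Wᵀ * (Cᵀ * C) * W).trace
      = (C * (W * Wᵀ - lam • (1 : Matrix (Fin r) (Fin r) ℝ)) * Cᵀ).trace
        + lam * (Cᵀ * C).trace := by
    have h1 : (Wᵀ * (Cᵀ * C) * W).trace = (C * (W * Wᵀ) * Cᵀ).trace := by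
      rw [show Wᵀ * (Cᵀ * C) * W = (Wᵀ * Cᵀ) * (C * W) by simp only [Matrix.mul_assoc],
        Matrix.trace_mul_comm]
      simp only [Matrix.mul_assoc]
    rw [h1, Matrix.mul_sub C, Matrix.sub_mul, Matrix.trace_sub, Matrix.mul_smul, Matrix.mul_one,
      Matrix.smul_mul, Matrix.trace_smul, Matrix.trace_mul_comm C Cᵀ, smul_eq_mul,
      sub_add_cancel]
  have hpos : 0 ≤ (C * (W * Wᵀ - lam • (1 : Matrix (Fin r) (Fin r) ℝ)) * Cᵀ).trace := by
    have := (hT.mul_mul_conjTranspose_same C).trace_nonneg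
    rwa [Matrix.conjTranspose_eq_transpose_of_trivial] at this
  have := aux_trace_nonneg (Om - Bᵀ * Z)
  rw [hX, hdec, Matrix.trace_add, htr, hFC]
  linarith
end

section
/- Let q be a real number with 0 ≤ q < 1/2, and let t ≥ τ ≥ 0 be integers. Suppose matrices B_i ∈ ℝ^{d×r}, Q_i ∈ ℝ^{d×r}, and R_{i+1} ∈ ℝ^{r×r} for i = t−τ, …, t−1 satisfy: B_iᵀ B_i = I_r, B_iᵀ Q_i = 0, ‖Q_i‖_F ≤ q, R_{i+1} is upper triangular with positive diagonal entries, R_{i+1}ᵀ R_{i+1} = I_r + Q_iᵀ Q_i, and B_{i+1} = (B_i + Q_i) R_{i+1}^{−1}. Then ‖B_t − B_{t−τ}‖ ≤ 2 τ q + 4 τ q², where ‖·‖ denotes the spectral norm. -/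
open Matrix BigOperators

/-- Spectral norm (largest singular value) of a real matrix. -/
noncomputable def specNorm {m n : ℕ} (A : Matrix (Fin m) (Fin n) ℝ) : ℝ :=
  ‖LinearMap.toContinuousLinearMap (Matrix.toEuclideanLin A)‖

open scoped Matrix.Norms.L2Operator in
lemma norm_le_of_dot {m n : ℕ} (A : Matrix (Fin m) (Fin n) ℝ) (c : ℝ) (hc : 0 ≤ c)
    (h : ∀ x : Fin n → ℝ, (A *ᵥ x) ⬝ᵥ (A *ᵥ x) ≤ c ^ 2 * (x ⬝ᵥ x)) : ‖A‖ ≤ c := by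
  rw [Matrix.l2_opNorm_def]
  refine ContinuousLinearMap.opNorm_le_bound _ hc fun x => ?_
  refine abs_le_of_sq_le_sq' ?_ (by positivity) |>.2
  have := h x.ofLp
  rw [mul_pow, EuclideanSpace.real_norm_sq_eq, EuclideanSpace.real_norm_sq_eq]
  simpa [dotProduct, pow_two, Matrix.toLpLin_apply] using this

open scoped Matrix.Norms.L2Operator in
lemma dot_le_of_norm {m n : ℕ} (A : Matrix (Fin m) (Fin n) ℝ) (x : Fin n → ℝ) :
    (A *ᵥ x) ⬝ᵥ (A *ᵥ x) ≤ ‖A‖ ^ 2 * (x ⬝ᵥ x) := by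
  have h := Matrix.l2_opNorm_mulVec A (WithLp.toLp 2 x)
  have h2 := pow_le_pow_left₀ (norm_nonneg _) h 2
  rw [mul_pow, EuclideanSpace.real_norm_sq_eq, EuclideanSpace.real_norm_sq_eq] at h2
  simpa [dotProduct, pow_two, Matrix.toLpLin_apply] using h2

lemma frob_nonneg' {m n : ℕ} (A : Matrix (Fin m) (Fin n) ℝ) : 0 ≤ frobNorm A :=
  Real.sqrt_nonneg _

lemma frob_sq {m n : ℕ} (A : Matrix (Fin m) (Fin n) ℝ) :
    frobNorm A ^ 2 = ∑ i, ∑ j, (A i j) ^ 2 :=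
  Real.sq_sqrt (Finset.sum_nonneg fun _ _ => Finset.sum_nonneg fun _ _ => sq_nonneg _)

open scoped Matrix.Norms.L2Operator in
lemma norm_le_frob {m n : ℕ} (A : Matrix (Fin m) (Fin n) ℝ) : ‖A‖ ≤ frobNorm A := by
  refine norm_le_of_dot A _ (frob_nonneg' A) fun x => ?_
  rw [frob_sq, Finset.sum_mul]
  refine Finset.sum_le_sum fun i _ => ?_
  have := Finset.sum_mul_sq_le_sq_mul_sq Finset.univ (A i) x
  simpa [dotProduct, mulVec, pow_two] using this

open scoped Matrix.Norms.L2Operator in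
lemma frob_mul_le {m n k : ℕ} (A : Matrix (Fin m) (Fin n) ℝ) (C : Matrix (Fin n) (Fin k) ℝ) :
    frobNorm (A * C) ≤ ‖A‖ * frobNorm C := by
  refine abs_le_of_sq_le_sq' ?_ (mul_nonneg (norm_nonneg _) (frob_nonneg' C)) |>.2
  rw [mul_pow, frob_sq, frob_sq, Finset.sum_comm]
  rw [Finset.sum_comm (f := fun i j => C i j ^ 2), Finset.mul_sum]
  refine Finset.sum_le_sum fun j _ => ?_
  have := dot_le_of_norm A (fun i => C i j)
  simpa [dotProduct, mulVec, pow_two, Matrix.mul_apply] using this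

open scoped Matrix.Norms.L2Operator in
lemma norm_transpose' {m n : ℕ} (A : Matrix (Fin m) (Fin n) ℝ) : ‖Aᵀ‖ = ‖A‖ := by
  rw [← Matrix.l2_opNorm_conjTranspose A, Matrix.conjTranspose_eq_transpose_of_trivial]

lemma dot_gram {m n : ℕ} (A : Matrix (Fin m) (Fin n) ℝ) (x : Fin n → ℝ) :
    (A *ᵥ x) ⬝ᵥ (A *ᵥ x) = x ⬝ᵥ ((Aᵀ * A) *ᵥ x) := by
  rw [← Matrix.mulVec_mulVec, Matrix.dotProduct_mulVec x, Matrix.vecMul_transpose]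

open scoped Matrix.Norms.L2Operator in
lemma step_bound {d r : ℕ} (q : ℝ) (hq0 : 0 ≤ q) (B Q B' : Matrix (Fin d) (Fin r) ℝ)
    (R : Matrix (Fin r) (Fin r) ℝ) (hB : Bᵀ * B = 1) (hQ : frobNorm Q ≤ q)
    (hT : R.BlockTriangular id) (hpos : ∀ j, 0 < R j j)
    (hR : Rᵀ * R = 1 + Qᵀ * Q) (hB' : B' = (B + Q) * R⁻¹) :
    ‖B' - B‖ ≤ q + q ^ 2 := by
  have hdet : IsUnit R.det := by
    rw [Matrix.det_of_upperTriangular hT]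
    exact (Finset.prod_pos fun j _ => hpos j).ne'.isUnit
  have hRS : R * R⁻¹ = 1 := Matrix.mul_nonsing_inv R hdet
  have hSR : R⁻¹ * R = 1 := Matrix.nonsing_inv_mul R hdet
  have hST : R⁻¹.BlockTriangular id := by
    haveI := Matrix.invertibleOfIsUnitDet R hdet
    exact Matrix.blockTriangular_inv_of_blockTriangular hT
  set S := R⁻¹ with hS
  have hSn : ‖S‖ ≤ 1 := by
    refine norm_le_of_dot S 1 zero_le_one fun x => ?_
    have h1 : x ⬝ᵥ x = (R *ᵥ (S *ᵥ x)) ⬝ᵥ (R *ᵥ (S *ᵥ x)) := by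
      rw [Matrix.mulVec_mulVec, hRS, Matrix.one_mulVec]
    rw [h1, dot_gram R, hR, Matrix.add_mulVec, dotProduct_add, Matrix.one_mulVec, ← dot_gram]
    have : 0 ≤ (Q *ᵥ (S *ᵥ x)) ⬝ᵥ (Q *ᵥ (S *ᵥ x)) :=
      Finset.sum_nonneg fun i _ => mul_self_nonneg _
    linarith
  have hBn : ‖B‖ ≤ 1 := by
    refine norm_le_of_dot B 1 zero_le_one fun x => ?_
    rw [dot_gram, hB, Matrix.one_mulVec]; linarith
  have hQn : ‖Q‖ ≤ q := (norm_le_frob Q).trans hQ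
  have hE : frobNorm (Sᵀ * (Qᵀ * Q)) ≤ q ^ 2 := by
    have h1 := frob_mul_le Sᵀ (Qᵀ * Q)
    have h2 := frob_mul_le Qᵀ Q
    rw [norm_transpose'] at h1 h2
    have h3 : ‖Q‖ * frobNorm Q ≤ q * q :=
      mul_le_mul hQn hQ (frob_nonneg' Q) hq0
    have h4 := mul_le_of_le_one_left (frob_nonneg' (Qᵀ * Q)) hSn
    nlinarith
  have hkey : R - Sᵀ = Sᵀ * (Qᵀ * Q) := by
    have h1 : Sᵀ * (Rᵀ * R) = R := by
      rw [← Matrix.mul_assoc, ← Matrix.transpose_mul, hRS, Matrix.transpose_one, Matrix.one_mul]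
    rw [hR, Matrix.mul_add, Matrix.mul_one] at h1
    nth_rewrite 1 [← h1]
    abel
  have hdiag : ∀ j, S j j * R j j = 1 := by
    intro j
    have h := congrFun (congrFun hSR j) j
    rw [Matrix.mul_apply, Matrix.one_apply_eq, Finset.sum_eq_single j] at h
    · exact h
    · intro k _ hk
      rcases lt_or_gt_of_ne hk with h' | h'
      · rw [hST (i := j) (j := k) h', zero_mul]
      · rw [hT (i := k) (j := j) h', mul_zero]
    · simp
  have hRI : frobNorm (R - 1) ≤ q ^ 2 := by
    refine le_trans (Real.sqrt_le_sqrt ?_) hE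
    refine Finset.sum_le_sum fun i _ => Finset.sum_le_sum fun j _ => ?_
    rw [← hkey]
    simp only [Matrix.sub_apply, Matrix.transpose_apply]
    rcases lt_trichotomy i j with h | h | h
    · rw [hST (i := j) (j := i) h, Matrix.one_apply_ne h.ne]
    · subst h
      rw [Matrix.one_apply_eq]
      have h1 := hdiag i
      have h2 := hpos i
      have h3 : 0 < S i i := by
        by_contra hn
        nlinarith
      have h4 : R i i - S i i = (R i i - 1) * (1 + S i i) := by linarith
      rw [h4, mul_pow]
      exact le_mul_of_one_le_right (sq_nonneg _) (by nlinarith)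
    · rw [hT (i := i) (j := j) h, Matrix.one_apply_ne h.ne']
      simpa using sq_nonneg _
  have hRIn := (norm_le_frob _).trans hRI
  have hdec : B' - B = Q * S - B * (S * (R - 1)) := by
    rw [hB', Matrix.mul_sub, hSR, Matrix.add_mul, Matrix.mul_sub, Matrix.mul_one, Matrix.mul_one]
    abel
  rw [hdec]
  have h1 := Matrix.l2_opNorm_mul Q S
  have h2 := Matrix.l2_opNorm_mul B (S * (R - 1))
  have h3 := Matrix.l2_opNorm_mul S (R - 1)
  have h4 := mul_le_of_le_one_right (norm_nonneg Q) hSn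
  have h5 := mul_le_of_le_one_left (norm_nonneg (S * (R - 1))) hBn
  have h6 := mul_le_of_le_one_left (norm_nonneg (R - 1)) hSn
  have h7 := norm_sub_le (Q * S) (B * (S * (R - 1)))
  linarith

open scoped Matrix.Norms.L2Operator in
lemma specNorm_eq {m n : ℕ} (A : Matrix (Fin m) (Fin n) ℝ) : specNorm A = ‖A‖ := rfl

open scoped Matrix.Norms.L2Operator in
lemma spec_tri {m n : ℕ} (X Y Z : Matrix (Fin m) (Fin n) ℝ) :
    specNorm (X - Z) ≤ specNorm (X - Y) + specNorm (Y - Z) := by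
  simp only [specNorm_eq]
  exact norm_sub_le_norm_sub_add_norm_sub X Y Z

/-- Drift bound for the QR-orthonormalized subspace iterates:
‖B_t − B_{t−τ}‖ ≤ 2τq + 4τq². -/
theorem subspace_iterates_drift
    (d r : ℕ) (q : ℝ) (hq0 : 0 ≤ q) (hq : q < 1 / 2)
    (t τ : ℕ) (hτt : τ ≤ t)
    (B Q : ℕ → Matrix (Fin d) (Fin r) ℝ)
    (R : ℕ → Matrix (Fin r) (Fin r) ℝ)
    (hcond : ∀ i, t - τ ≤ i → i < t →
      (B i)ᵀ * B i = 1
      ∧ (B i)ᵀ * Q i = 0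
      ∧ frobNorm (Q i) ≤ q
      ∧ (R (i + 1)).BlockTriangular id
      ∧ (∀ j, 0 < R (i + 1) j j)
      ∧ (R (i + 1))ᵀ * R (i + 1) = 1 + (Q i)ᵀ * Q i
      ∧ B (i + 1) = (B i + Q i) * (R (i + 1))⁻¹) :
    specNorm (B t - B (t - τ)) ≤ 2 * τ * q + 4 * τ * q ^ 2 := by
  have key : ∀ k, k ≤ τ → specNorm (B (t - τ + k) - B (t - τ)) ≤ k * (q + q ^ 2) := by
    intro k
    induction k with
    | zero => intro _; simp [specNorm]
    | succ k ih =>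
      intro hk
      have h1 := ih (by omega)
      obtain ⟨hB, -, hQ, hT, hpos, hR, hB'⟩ := hcond (t - τ + k) (by omega) (by omega)
      have h2 := step_bound q hq0 _ _ _ _ hB hQ hT hpos hR hB'
      rw [← specNorm_eq] at h2
      have h3 := spec_tri (B (t - τ + k + 1)) (B (t - τ + k)) (B (t - τ))
      rw [← add_assoc]
      push_cast
      linarith
  have h := key τ le_rfl
  rw [Nat.sub_add_cancel hτt] at h
  have h1 : (0 : ℝ) ≤ τ * q := by positivity
  have h2 : (0 : ℝ) ≤ τ * q ^ 2 := by positivity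
  linarith
end

section
/- Let L ≥ 1 be an integer, β ≥ 0, U_ω ≥ 0, and let Π denote the Euclidean projection onto the closed ball of radius U_ω centered at the origin in ℝ^r. Let B ∈ ℝ^{d×r} satisfy BᵀB = I_r, let φ_0, …, φ_L ∈ ℝ^d with ‖φ_ℓ‖ ≤ 1 for all ℓ, let r_0, …, r_{L−1} ∈ ℝ, let η, J ∈ ℝ, let ω ∈ ℝ^r and z ∈ ℝ^d, and set w := B ω, x := w − z, δ := Σ_{ℓ=0}^{L−1}(r_ℓ − η) + (φ_L − φ_0)ᵀ w, and b := Σ_{ℓ=0}^{L−1}((r_ℓ − J) + (φ_{ℓ+1} − φ_ℓ)ᵀ z) φ_0. Then ‖Π(ω + (β/L) δ Bᵀ φ_0) − Π(ω)‖ ≤ (2β/L)‖x‖ + (β/L)‖b‖ + β|η − J|. -/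
open Matrix BigOperators

/-- Euclidean norm of a vector. -/
noncomputable def euclNorm {n : ℕ} (v : Fin n → ℝ) : ℝ :=
  Real.sqrt (∑ i, (v i) ^ 2)

theorem euclNorm_eq {n : ℕ} (v : Fin n → ℝ) : euclNorm v = ‖WithLp.toLp 2 v‖ := by
  simp [euclNorm, EuclideanSpace.norm_eq]

theorem euclNorm_sq {n : ℕ} (v : Fin n → ℝ) : euclNorm v ^ 2 = v ⬝ᵥ v := by
  rw [euclNorm, Real.sq_sqrt (Finset.sum_nonneg fun i _ => sq_nonneg _)]
  simp [dotProduct, sq]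

theorem euclNorm_nonneg {n : ℕ} (v : Fin n → ℝ) : 0 ≤ euclNorm v := Real.sqrt_nonneg _

theorem euclNorm_add_le {n : ℕ} (v w : Fin n → ℝ) :
    euclNorm (v + w) ≤ euclNorm v + euclNorm w := by
  simp only [euclNorm_eq, WithLp.toLp_add]
  exact norm_add_le _ _

theorem euclNorm_sub_le {n : ℕ} (v w : Fin n → ℝ) :
    euclNorm (v - w) ≤ euclNorm v + euclNorm w := by
  simp only [euclNorm_eq, WithLp.toLp_sub]
  exact norm_sub_le _ _

theorem euclNorm_smul {n : ℕ} (c : ℝ) (v : Fin n → ℝ) :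
    euclNorm (c • v) = |c| * euclNorm v := by
  simp only [euclNorm_eq, WithLp.toLp_smul, norm_smul, Real.norm_eq_abs]

theorem abs_dot_le {n : ℕ} (v w : Fin n → ℝ) :
    |v ⬝ᵥ w| ≤ euclNorm v * euclNorm w := by
  simp only [euclNorm_eq]
  have h := abs_real_inner_le_norm (WithLp.toLp 2 v) (WithLp.toLp 2 w)
  rwa [EuclideanSpace.inner_toLp_toLp, star_trivial, dotProduct_comm] at h

theorem euclNorm_transpose_le {d r : ℕ} (B : Matrix (Fin d) (Fin r) ℝ) (hB : Bᵀ * B = 1)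
    (v : Fin d → ℝ) : euclNorm (Bᵀ.mulVec v) ≤ euclNorm v := by
  set u := Bᵀ.mulVec v with hu
  have h1 : (B.mulVec u) ⬝ᵥ (B.mulVec u) = u ⬝ᵥ u := by
    rw [dotProduct_mulVec, ← mulVec_transpose, mulVec_mulVec, hB, one_mulVec]
  have h2 : v ⬝ᵥ (B.mulVec u) = u ⬝ᵥ u := by
    rw [dotProduct_mulVec, ← mulVec_transpose]
  have h3 : 0 ≤ (v - B.mulVec u) ⬝ᵥ (v - B.mulVec u) := by
    rw [← euclNorm_sq]; positivity
  rw [sub_dotProduct, dotProduct_sub, dotProduct_sub, h1, dotProduct_comm (B.mulVec u) v, h2,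
    ← euclNorm_sq, ← euclNorm_sq] at h3
  nlinarith [euclNorm_nonneg u, euclNorm_nonneg v]

theorem proj_var {r : ℕ} (U : ℝ) (v p : Fin r → ℝ) (hp : euclNorm p ≤ U)
    (h : ∀ w' : Fin r → ℝ, euclNorm w' ≤ U → euclNorm (v - p) ≤ euclNorm (v - w'))
    (q : Fin r → ℝ) (hq : euclNorm q ≤ U) : (v - p) ⬝ᵥ (q - p) ≤ 0 := by
  by_contra! hc
  set a := (v - p) ⬝ᵥ (q - p) with ha
  set s := (q - p) ⬝ᵥ (q - p) with hs
  have hs0 : 0 ≤ s := by rw [hs, ← euclNorm_sq]; positivity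
  have key : ∀ t : ℝ, 0 ≤ t → t ≤ 1 → 0 ≤ - 2 * t * a + t ^ 2 * s := by
    intro t h0 h1
    have hm : euclNorm ((1 - t) • p + t • q) ≤ U := by
      refine (euclNorm_add_le _ _).trans ?_
      rw [euclNorm_smul, euclNorm_smul, abs_of_nonneg h0, abs_of_nonneg (by linarith)]
      nlinarith
    have h2 := pow_le_pow_left₀ (euclNorm_nonneg _) (h _ hm) 2
    have e : v - ((1 - t) • p + t • q) = (v - p) - t • (q - p) := by
      ext i; simp; ring
    have e2 : ∀ f g : Fin r → ℝ,
        (f - t • g) ⬝ᵥ (f - t • g) = f ⬝ᵥ f - 2 * t * (f ⬝ᵥ g) + t ^ 2 * (g ⬝ᵥ g) := by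
      intro f g
      simp only [sub_dotProduct, dotProduct_sub, smul_dotProduct, dotProduct_smul, smul_eq_mul,
        dotProduct_comm g f]
      ring
    rw [e, euclNorm_sq, euclNorm_sq, e2, ← ha, ← hs] at h2
    nlinarith
  have hpos : 0 < a + s := by linarith
  have := key (a / (a + s)) (by positivity) ((div_le_one hpos).2 (by linarith))
  have e : - 2 * (a / (a + s)) * a + (a / (a + s)) ^ 2 * s
      = - (a ^ 2 * (2 * a + s)) / (a + s) ^ 2 := by
    field_simp; ring
  rw [e, neg_div] at this
  have : 0 < a ^ 2 * (2 * a + s) / (a + s) ^ 2 := by positivity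
  linarith

theorem nonexp {r : ℕ} (u v p q : Fin r → ℝ) (h1 : (u - p) ⬝ᵥ (q - p) ≤ 0)
    (h2 : (v - q) ⬝ᵥ (p - q) ≤ 0) : euclNorm (p - q) ≤ euclNorm (u - v) := by
  have h3 : (p - q) ⬝ᵥ (p - q) ≤ (u - v) ⬝ᵥ (p - q) := by
    have e : (u - v) ⬝ᵥ (p - q) - (p - q) ⬝ᵥ (p - q)
        = - ((u - p) ⬝ᵥ (q - p)) - (v - q) ⬝ᵥ (p - q) := by
      simp only [sub_dotProduct, dotProduct_sub]; ring
    linarith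
  have h4 := (le_abs_self _).trans (abs_dot_le (u - v) (p - q))
  rw [← euclNorm_sq] at h3
  by_contra! hc
  nlinarith [euclNorm_nonneg (u - v)]

/-- One-step bound on the projected local-head update increment:
‖Π(ω + (β/L)δ Bᵀφ₀) − Π(ω)‖ ≤ (2β/L)‖x‖ + (β/L)‖b‖ + β|η−J|. -/
theorem local_head_one_step_bound
    (d r L : ℕ) (hL : 1 ≤ L)
    (β Uω : ℝ) (hβ : 0 ≤ β) (hUω : 0 ≤ Uω)
    (proj : (Fin r → ℝ) → (Fin r → ℝ))
    -- `proj` is the Euclidean projection onto the closed ball of radius U_ω: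
    (hproj : ∀ v : Fin r → ℝ, euclNorm (proj v) ≤ Uω
      ∧ ∀ w' : Fin r → ℝ, euclNorm w' ≤ Uω → euclNorm (v - proj v) ≤ euclNorm (v - w'))
    (B : Matrix (Fin d) (Fin r) ℝ) (hB : Bᵀ * B = 1)
    (φ : ℕ → Fin d → ℝ) (hφ : ∀ ℓ, ℓ ≤ L → euclNorm (φ ℓ) ≤ 1)
    (rew : ℕ → ℝ) (η J : ℝ) (ω : Fin r → ℝ) (z : Fin d → ℝ)
    (w : Fin d → ℝ) (hw : w = B.mulVec ω)
    (x : Fin d → ℝ) (hx : x = w - z)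
    (δ : ℝ) (hδ : δ = (∑ ℓ ∈ Finset.range L, (rew ℓ - η)) + (φ L - φ 0) ⬝ᵥ w)
    (b : Fin d → ℝ)
    (hb : b = ∑ ℓ ∈ Finset.range L, ((rew ℓ - J) + (φ (ℓ + 1) - φ ℓ) ⬝ᵥ z) • φ 0) :
    euclNorm (proj (ω + ((β / (L : ℝ)) * δ) • (Bᵀ.mulVec (φ 0))) - proj ω)
      ≤ (2 * β / (L : ℝ)) * euclNorm x + (β / (L : ℝ)) * euclNorm b + β * |η - J| := by
  have hLp : (0 : ℝ) < L := by exact_mod_cast hL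
  have hφ0 := hφ 0 (Nat.zero_le _)
  have hφL := hφ L le_rfl
  set v := ω + ((β / (L : ℝ)) * δ) • (Bᵀ.mulVec (φ 0)) with hv
  have hne : euclNorm (proj v - proj ω) ≤ euclNorm (v - ω) :=
    nonexp _ _ _ _
      (proj_var Uω v _ (hproj v).1 (hproj v).2 _ (hproj ω).1)
      (proj_var Uω ω _ (hproj ω).1 (hproj ω).2 _ (hproj v).1)
  have hstep : euclNorm (v - ω) ≤ (β / L) * euclNorm (δ • φ 0) := by
    rw [hv, add_sub_cancel_left, euclNorm_smul, euclNorm_smul, abs_mul,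
      abs_of_nonneg (by positivity : 0 ≤ β / (L : ℝ)), mul_assoc]
    have := euclNorm_transpose_le B hB (φ 0)
    gcongr
  have hsum : b = ((∑ ℓ ∈ Finset.range L, (rew ℓ - J)) + (φ L - φ 0) ⬝ᵥ z) • φ 0 := by
    rw [hb, ← Finset.sum_smul, Finset.sum_add_distrib, ← sum_dotProduct, Finset.sum_range_sub]
  have hdec : δ • φ 0 = ((φ L - φ 0) ⬝ᵥ x) • φ 0 + b + ((L : ℝ) * (J - η)) • φ 0 := by
    rw [hsum, ← add_smul, ← add_smul, hδ, hx, dotProduct_sub]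
    congr 1
    simp only [Finset.sum_sub_distrib, Finset.sum_const, Finset.card_range, nsmul_eq_mul]
    ring
  have hbd : euclNorm (δ • φ 0) ≤ 2 * euclNorm x + euclNorm b + L * |η - J| := by
    rw [hdec]
    refine (euclNorm_add_le _ _).trans (add_le_add ((euclNorm_add_le _ _).trans ?_) ?_)
    · gcongr
      rw [euclNorm_smul]
      have h1 := abs_dot_le (φ L - φ 0) x
      have h2 := euclNorm_sub_le (φ L) (φ 0)
      have h3 : |(φ L - φ 0) ⬝ᵥ x| ≤ 2 * euclNorm x :=
        h1.trans (mul_le_mul_of_nonneg_right (by linarith) (euclNorm_nonneg x))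
      exact (mul_le_of_le_one_right (abs_nonneg _) hφ0).trans h3
    · rw [euclNorm_smul, abs_mul, abs_of_pos hLp, abs_sub_comm]
      exact mul_le_of_le_one_right (by positivity) hφ0
  calc _ ≤ (β / L) * euclNorm (δ • φ 0) := hne.trans hstep
    _ ≤ (β / L) * (2 * euclNorm x + euclNorm b + L * |η - J|) := by gcongr
    _ = _ := by field_simp
end
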